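/- arXiv:2104.04475 — 3 statements merged into one kernel-verified Lean document; each statement's English description precedes it below -/
import Mathlib

section
/- For q ∈ ℤ, the solvable Baumslag–Solitar group BS(1,q) = ⟨a, b | a b a⁻¹ = b^q⟩ (with the convention BS(1,0) = ℤ) admits a regular positive cone with respect to some finite generating set if and only if q ≥ −1. -/
/-!
Write `h : BS(1,q) → ℤ` for the height (`a ↦ 1`, `b ↦ 0`) and, for `q ≠ 0`, let `BS(1,q)` act on `ℚ`
by `a : x ↦ q x`, `b : x ↦ x + 1`. The image of `0` under `g` is its translation part `t g`, and
`t (g g') = t g + q ^ h g * t g'`. The normal form `a⁻ᵏ bᵐ aˡ` (`bs_normal_form`) shows that the pair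
`(h, t)` determines an element (`bs_eq_one`).

Existence. For `q ≥ 1` the action preserves the order of `ℚ`, and the elements with `t g > 0`, or
`t g = 0` and `h g > 0`, form a positive cone evaluated by `(a⁻¹)* b⁺ a* ∪ a⁺` (`posCone_regular`).
For `q = -1` the lexicographic cone of the Klein bottle group is evaluated by
`b* a⁺ ∪ (b⁻¹)* a⁺ ∪ b⁺` (`kleinCone_regular`). For `q = 0` the group is infinite cyclic
(`exists_regular_cone_zero`).

Non-existence for `q ≤ -2`. Conjugation by `a` acts as `y ↦ y ^ q` on the kernel of `h`, hence
reverses the order there, and this forces every left order to be lexicographic with `h` leading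
(`IsPositiveCone.mem_of_ht_pos`). So `h` has a constant sign on a positive cone `P`. If `P` is
evaluated by an automaton, pumping shows that loops met by accepted words of height zero have height
zero, whence prefixes of such words have bounded height (`DFA.exists_prefix_bound`). By the cocycle
identity the translation parts of the elements of `P` of height zero then have a common denominator
(`bsTr_word_denom`), whereas `P` contains `a⁻ᵏ b aᵏ` or its inverse, of translation part `± q ^ (-k)`,
for every `k` (`not_regular_of_le`).
-/

/-- A positive cone on a group `G`: a subsemigroup `P` such that
`G = P ⊔ P⁻¹ ⊔ {1}` is a disjoint union. -/
def IsPositiveCone {G : Type*} [Group G] (P : Set G) : Prop :=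
  (∀ a ∈ P, ∀ b ∈ P, a * b ∈ P) ∧
  (∀ g : G, g ∈ P ∨ g⁻¹ ∈ P ∨ g = 1) ∧
  (∀ g ∈ P, g⁻¹ ∉ P) ∧ (1 : G) ∉ P

/-- A positive cone on `G` relative to a subgroup `H`: a subsemigroup `P` with
`G = P ⊔ H ⊔ P⁻¹` a disjoint union. -/
def IsRelPositiveCone {G : Type*} [Group G] (H : Subgroup G) (P : Set G) : Prop :=
  (∀ a ∈ P, ∀ b ∈ P, a * b ∈ P) ∧
  (∀ g : G, g ∈ P ∨ g⁻¹ ∈ P ∨ g ∈ H) ∧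
  (∀ g ∈ P, g⁻¹ ∉ P) ∧ (∀ g ∈ P, g ∉ H)

/-- A positive cone of the subgroup `H`, viewed as a subset of the ambient group `G`. -/
def IsPositiveConeIn {G : Type*} [Group G] (H : Subgroup G) (P : Set G) : Prop :=
  P ⊆ (H : Set G) ∧
  (∀ a ∈ P, ∀ b ∈ P, a * b ∈ P) ∧
  (∀ h ∈ H, h ∈ P ∨ h⁻¹ ∈ P ∨ h = 1) ∧
  (∀ g ∈ P, g⁻¹ ∉ P) ∧ (1 : G) ∉ P

/-- The evaluation (image) in `G` of a language `L ⊆ X*` under a monoid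
homomorphism `π : X* → G`. -/
def evalLang {X : Type*} {G : Type*} [Group G] (π : FreeMonoid X →* G) (L : Language X) :
    Set G :=
  (fun w : List X => π (FreeMonoid.ofList w)) '' L

/-- `S ⊆ G` is the evaluation of a regular language over some finite generating set of `G`. -/
def HasRegularConeEval {G : Type*} [Group G] (S : Set G) : Prop :=
  ∃ (X : Type) (_ : Fintype X) (π : FreeMonoid X →* G),
    Function.Surjective π ∧ ∃ L : Language X, L.IsRegular ∧ evalLang π L = S

/-- The single relator `a b a⁻¹ b^{-q}` of the Baumslag–Solitar group `BS(1,q)`,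
in the free group on `Bool` with `true ↦ a` and `false ↦ b`. -/
def bsRels (q : ℤ) : Set (FreeGroup Bool) :=
  {FreeGroup.of true * FreeGroup.of false * (FreeGroup.of true)⁻¹ * (FreeGroup.of false ^ q)⁻¹}

/-- The Baumslag–Solitar group `BS(1,q) = ⟨a, b ∣ a b a⁻¹ = b^q⟩`. -/
def BS (q : ℤ) : Type := PresentedGroup (bsRels q)

instance (q : ℤ) : Group (BS q) := inferInstanceAs (Group (PresentedGroup (bsRels q)))

/-- The generator `a` of `BS(1,q)`. -/
def bsA (q : ℤ) : BS q := PresentedGroup.of true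

/-- The generator `b` of `BS(1,q)`. -/
def bsB (q : ℤ) : BS q := PresentedGroup.of false

/-- The evaluation map from the free monoid on the alphabet `{a, a⁻¹, b, b⁻¹}`
(here `Fin 4`) onto `BS(1,q)`. -/
def bsPi (q : ℤ) : FreeMonoid (Fin 4) →* BS q :=
  FreeMonoid.lift ![bsA q, (bsA q)⁻¹, bsB q, (bsB q)⁻¹]

/-! ### Normal form and the affine model -/

theorem bs_conj (q : ℤ) : bsA q * bsB q * (bsA q)⁻¹ = bsB q ^ q := by
  have h : bsA q * bsB q * (bsA q)⁻¹ * (bsB q ^ q)⁻¹ = 1 :=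
    PresentedGroup.one_of_mem (rels := bsRels q) (Set.mem_singleton _)
  exact mul_inv_eq_one.mp h

theorem bs_conj_zpow (q m : ℤ) : bsA q * bsB q ^ m = bsB q ^ (q * m) * bsA q := by
  rw [zpow_mul, ← bs_conj, conj_zpow, inv_mul_cancel_right]

theorem bs_conj_pow_zpow (q m : ℤ) (l : ℕ) :
    bsA q ^ l * bsB q ^ m = bsB q ^ (q ^ l * m) * bsA q ^ l := by
  induction l with
  | zero => simp
  | succ l ih =>
    rw [pow_succ', mul_assoc, ih, ← mul_assoc, bs_conj_zpow, mul_assoc]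
    congr 2
    ring

/-- Every element has the form `a⁻ᵏ bᵐ aˡ` with `k, l ≥ 0`. This holds for `q = 0` too. -/
theorem bs_normal_form (q : ℤ) (g : BS q) :
    ∃ (k l : ℕ) (m : ℤ), g = (bsA q ^ k)⁻¹ * bsB q ^ m * bsA q ^ l := by
  have hg : g ∈ Subgroup.closure ({bsA q, bsB q} : Set (BS q)) := by
    refine PresentedGroup.generated_by (bsRels q)
      (Subgroup.closure ({bsA q, bsB q} : Set (BS q))) (fun j => ?_) g
    cases j
    · exact Subgroup.subset_closure (Or.inr rfl)
    · exact Subgroup.subset_closure (Or.inl rfl)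
  induction hg using Subgroup.closure_induction_right with
  | one => exact ⟨0, 0, 0, by simp⟩
  | mul_right x y hx hy ih =>
    obtain ⟨k, l, m, rfl⟩ := ih
    rcases hy with rfl | rfl
    · exact ⟨k, l + 1, m, by rw [pow_succ, ← mul_assoc]⟩
    · refine ⟨k, l, m + q ^ l * 1, ?_⟩
      rw [zpow_add, mul_assoc, mul_assoc, mul_assoc, mul_assoc, ← bs_conj_pow_zpow, zpow_one]
  | mul_inv_cancel x y hx hy ih =>
    obtain ⟨k, l, m, rfl⟩ := ih
    rcases hy with rfl | rfl
    · rcases l with _ | l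
      · refine ⟨k + 1, 0, q * m, ?_⟩
        rw [pow_succ', mul_inv_rev, pow_zero, mul_one, mul_one, mul_assoc, mul_assoc]
        congr 1
        rw [eq_inv_mul_iff_mul_eq, ← mul_assoc, bs_conj_zpow, mul_inv_cancel_right]
      · exact ⟨k, l, m, by rw [pow_succ]; group⟩
    · refine ⟨k, l, m + q ^ l * (-1), ?_⟩
      rw [zpow_add, mul_assoc, mul_assoc, mul_assoc, mul_assoc, ← bs_conj_pow_zpow, zpow_neg_one]

/-- The height homomorphism `BS(1,q) → ℤ` (written multiplicatively), `a ↦ 1`, `b ↦ 0`. -/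
def bsHtHom (q : ℤ) : BS q →* Multiplicative ℤ :=
  PresentedGroup.toGroup (rels := bsRels q)
    (f := fun x => if x then Multiplicative.ofAdd (1 : ℤ) else 1) (by
      rintro r rfl
      simp)

/-- The height of an element: its exponent sum in `a`. -/
def bsHt (q : ℤ) (g : BS q) : ℤ := (bsHtHom q g).toAdd

@[simp] theorem bsHt_a (q : ℤ) : bsHt q (bsA q) = 1 := by
  have : bsHtHom q (bsA q) = Multiplicative.ofAdd 1 := PresentedGroup.toGroup.of _
  simp [bsHt, this]

@[simp] theorem bsHt_b (q : ℤ) : bsHt q (bsB q) = 0 := by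
  have : bsHtHom q (bsB q) = 1 := PresentedGroup.toGroup.of _
  simp [bsHt, this]

@[simp] theorem bsHt_one (q : ℤ) : bsHt q 1 = 0 := by simp [bsHt]

@[simp] theorem bsHt_mul (q : ℤ) (g h : BS q) : bsHt q (g * h) = bsHt q g + bsHt q h := by
  simp [bsHt]

@[simp] theorem bsHt_inv (q : ℤ) (g : BS q) : bsHt q g⁻¹ = -bsHt q g := by
  simp [bsHt]

@[simp] theorem bsHt_pow (q : ℤ) (g : BS q) (n : ℕ) : bsHt q (g ^ n) = n * bsHt q g := by
  simp [bsHt]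

@[simp] theorem bsHt_zpow (q : ℤ) (g : BS q) (n : ℤ) : bsHt q (g ^ n) = n * bsHt q g := by
  simp [bsHt]

/-- The affine maps of `ℚ` by which the generators act: `a : x ↦ q x`, `b : x ↦ x + 1`. -/
def bsGen (q : ℤ) (hq : (q : ℚ) ≠ 0) (x : Bool) : Equiv.Perm ℚ :=
  if x then Equiv.mulLeft₀ (q : ℚ) hq else Equiv.addRight (1 : ℚ)

theorem bsGen_rel (q : ℤ) (hq : (q : ℚ) ≠ 0) :
    ∀ r ∈ bsRels q, FreeGroup.lift (bsGen q hq) r = 1 := by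
  rintro r rfl
  simp only [map_mul, map_inv, map_zpow, FreeGroup.lift_apply_of]
  rw [mul_inv_eq_one, mul_inv_eq_iff_eq_mul]
  ext x
  simp [bsGen, Equiv.Perm.mul_apply]
  ring

/-- For `q ≠ 0`, the action of `BS(1,q)` on `ℚ` by affine maps. -/
def bsRho (q : ℤ) (hq : q ≠ 0) : BS q →* Equiv.Perm ℚ :=
  PresentedGroup.toGroup (bsGen_rel q (Int.cast_ne_zero.mpr hq))

/-- The translation part of the affine map defined by a group element. -/
def bsTr (q : ℤ) (hq : q ≠ 0) (g : BS q) : ℚ := bsRho q hq g 0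

theorem bsRho_a (q : ℤ) (hq : q ≠ 0) (x : ℚ) : bsRho q hq (bsA q) x = q * x := by
  have : bsRho q hq (bsA q) = Equiv.mulLeft₀ (q : ℚ) (Int.cast_ne_zero.mpr hq) :=
    PresentedGroup.toGroup.of (bsGen_rel q (Int.cast_ne_zero.mpr hq)) (x := true)
  simp [this]

theorem bsRho_b (q : ℤ) (hq : q ≠ 0) (x : ℚ) : bsRho q hq (bsB q) x = x + 1 := by
  have : bsRho q hq (bsB q) = Equiv.addRight (1 : ℚ) :=
    PresentedGroup.toGroup.of (bsGen_rel q (Int.cast_ne_zero.mpr hq)) (x := false)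
  simp [this]

theorem bsRho_apow (q : ℤ) (hq : q ≠ 0) (k : ℕ) (x : ℚ) :
    bsRho q hq (bsA q ^ k) x = q ^ k * x := by
  induction k with
  | zero => simp
  | succ k ih => rw [pow_succ', map_mul, Equiv.Perm.mul_apply, ih, bsRho_a]; ring

theorem bsRho_bzpow (q : ℤ) (hq : q ≠ 0) (m : ℤ) (x : ℚ) :
    bsRho q hq (bsB q ^ m) x = x + m := by
  have : bsRho q hq (bsB q) = Equiv.addRight (1 : ℚ) :=
    PresentedGroup.toGroup.of (bsGen_rel q (Int.cast_ne_zero.mpr hq)) (x := false)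
  simp [this]

theorem bsRho_apow_inv (q : ℤ) (hq : q ≠ 0) (k : ℕ) (x : ℚ) :
    bsRho q hq (bsA q ^ k)⁻¹ x = x / q ^ k := by
  have hq' : (q : ℚ) ≠ 0 := by exact_mod_cast hq
  rw [map_inv, Equiv.Perm.inv_eq_iff_eq, bsRho_apow]
  field_simp

theorem bsRho_normal (q : ℤ) (hq : q ≠ 0) (k l : ℕ) (m : ℤ) (x : ℚ) :
    bsRho q hq ((bsA q ^ k)⁻¹ * bsB q ^ m * bsA q ^ l) x = (q ^ l * x + m) / q ^ k := by
  rw [map_mul, map_mul, Equiv.Perm.mul_apply, Equiv.Perm.mul_apply, bsRho_apow, bsRho_bzpow,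
    bsRho_apow_inv]

theorem bsTr_normal (q : ℤ) (hq : q ≠ 0) (k l : ℕ) (m : ℤ) :
    bsTr q hq ((bsA q ^ k)⁻¹ * bsB q ^ m * bsA q ^ l) = m / q ^ k := by
  rw [bsTr, bsRho_normal, mul_zero, zero_add]

theorem bsRho_eq (q : ℤ) (hq : q ≠ 0) (g : BS q) (x : ℚ) :
    bsRho q hq g x = (q : ℚ) ^ (bsHt q g) * x + bsTr q hq g := by
  have hq' : (q : ℚ) ≠ 0 := by exact_mod_cast hq
  obtain ⟨k, l, m, rfl⟩ := bs_normal_form q g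
  rw [bsTr_normal, bsRho_normal]
  simp [zpow_add₀ hq', zpow_neg]
  field_simp

/-- The translation part is a cocycle over the height. -/
theorem bsTr_mul (q : ℤ) (hq : q ≠ 0) (g h : BS q) :
    bsTr q hq (g * h) = bsTr q hq g + (q : ℚ) ^ (bsHt q g) * bsTr q hq h := by
  rw [bsTr, map_mul, Equiv.Perm.mul_apply, bsRho_eq, add_comm]
  rfl

@[simp] theorem bsTr_one (q : ℤ) (hq : q ≠ 0) : bsTr q hq 1 = 0 := by simp [bsTr]

@[simp] theorem bsTr_a (q : ℤ) (hq : q ≠ 0) : bsTr q hq (bsA q) = 0 := by simp [bsTr, bsRho_a]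

@[simp] theorem bsTr_b (q : ℤ) (hq : q ≠ 0) : bsTr q hq (bsB q) = 1 := by simp [bsTr, bsRho_b]

theorem bsTr_inv (q : ℤ) (hq : q ≠ 0) (g : BS q) :
    (q : ℚ) ^ (bsHt q g) * bsTr q hq g⁻¹ = -bsTr q hq g := by
  have h := bsTr_mul q hq g g⁻¹
  rw [mul_inv_cancel, bsTr_one] at h
  linarith

/-- The affine model together with the height is faithful. -/
theorem bs_eq_one (q : ℤ) (hq : q ≠ 0) (g : BS q) (hn : bsHt q g = 0) (ht : bsTr q hq g = 0) :
    g = 1 := by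
  have hq' : (q : ℚ) ≠ 0 := by exact_mod_cast hq
  obtain ⟨k, l, m, rfl⟩ := bs_normal_form q g
  rw [bsTr_normal] at ht
  have hm : m = 0 := by
    have := (div_eq_zero_iff.mp ht).resolve_right (pow_ne_zero _ hq')
    exact_mod_cast this
  have hkl : k = l := by
    simp at hn
    omega
  simp [hm, hkl]

/-! ### Positive cones for negative `q` -/

theorem IsPositiveCone.pow_mem {G : Type*} [Group G] {P : Set G} (hP : IsPositiveCone P) {g : G}
    (hg : g ∈ P) (n : ℕ) : g ^ (n + 1) ∈ P := by
  induction n with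
  | zero => simpa using hg
  | succ n ih => rw [pow_succ]; exact hP.1 _ ih _ hg

theorem IsPositiveCone.inv {G : Type*} [Group G] {P : Set G} (hP : IsPositiveCone P) :
    IsPositiveCone {g : G | g⁻¹ ∈ P} := by
  obtain ⟨h1, h2, h3, h4⟩ := hP
  refine ⟨fun a ha b hb => ?_, fun g => ?_, fun g hg hg' => h3 _ hg hg', by simpa using h4⟩
  · simp only [Set.mem_ofPred_eq, mul_inv_rev]
    exact h1 _ hb _ ha
  · simpa [or_left_comm] using h2 g

/-- Conjugation by `a` acts on the kernel of the height as `y ↦ y ^ q`. -/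
theorem bs_conj_of_ht_eq_zero (q : ℤ) (y : BS q) (hy : bsHt q y = 0) :
    bsA q * y * (bsA q)⁻¹ = y ^ q := by
  obtain ⟨k, l, m, rfl⟩ := bs_normal_form q y
  obtain rfl : k = l := by
    simp at hy
    omega
  have h1 : ((bsA q ^ k)⁻¹ * bsB q ^ m * bsA q ^ k) ^ q
      = (bsA q ^ k)⁻¹ * (bsB q ^ m) ^ q * bsA q ^ k := by
    simpa using conj_zpow (i := q) (a := (bsA q ^ k)⁻¹) (b := bsB q ^ m)
  rw [h1, ← zpow_mul, mul_comm m q]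
  have h2 := bs_conj_zpow q m
  calc bsA q * ((bsA q ^ k)⁻¹ * bsB q ^ m * bsA q ^ k) * (bsA q)⁻¹
      = (bsA q ^ k)⁻¹ * (bsA q * bsB q ^ m) * (bsA q)⁻¹ * bsA q ^ k := by group
    _ = (bsA q ^ k)⁻¹ * bsB q ^ (q * m) * bsA q ^ k := by rw [h2]; group

/-- When `q < 0` and `a` is positive, the whole coset of `a` modulo the kernel of the height is
positive: conjugation by `a` reverses the order on that kernel, so for each `x` in it either `x` or
`a⁻¹ x a` is non-negative. -/
theorem IsPositiveCone.mul_a_mem {q : ℤ} (hq : q < 0) {P : Set (BS q)} (hP : IsPositiveCone P)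
    (ha : bsA q ∈ P) (x : BS q) (hx : bsHt q x = 0) : x * bsA q ∈ P := by
  rcases hP.2.1 x with h | h | h
  · exact hP.1 _ h _ ha
  · set y := (bsA q)⁻¹ * x * bsA q with hy
    have hxy : x * bsA q = bsA q * y := by rw [hy]; group
    have hyx : y ^ q = x := by
      rw [← bs_conj_of_ht_eq_zero q y (by simp [hy, hx]), hy]; group
    rw [hxy]
    rcases hP.2.1 y with h' | h' | h'
    · exact hP.1 _ ha _ h'
    · exfalso
      obtain ⟨n, rfl⟩ : ∃ n : ℕ, q = -(n + 1 : ℕ) := ⟨(-q).toNat - 1, by omega⟩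
      have := hP.pow_mem h' n
      rw [inv_pow, ← zpow_natCast, ← zpow_neg, hyx] at this
      exact hP.2.2.1 _ this h
    · simpa [h'] using ha
  · simpa [h] using ha

/-- If `q < 0` and `a` is positive, the order is lexicographic with the height leading. -/
theorem IsPositiveCone.mem_of_ht_pos {q : ℤ} (hq : q < 0) {P : Set (BS q)}
    (hP : IsPositiveCone P) (ha : bsA q ∈ P) (g : BS q) (hg : 0 < bsHt q g) : g ∈ P := by
  obtain ⟨N, hN⟩ : ∃ N : ℕ, bsHt q g = N + 1 := ⟨(bsHt q g).toNat - 1, by omega⟩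
  have h1 := hP.mul_a_mem hq ha (g * (bsA q ^ (N + 1))⁻¹) (by simp [hN])
  rcases N with _ | N
  · simpa using h1
  · have h2 := hP.1 _ h1 _ (hP.pow_mem ha N)
    convert h2 using 1
    rw [pow_succ (bsA q) (N + 1)]
    group

theorem IsPositiveCone.ht_nonneg {q : ℤ} (hq : q < 0) {P : Set (BS q)}
    (hP : IsPositiveCone P) (ha : bsA q ∈ P) (g : BS q) (hg : g ∈ P) : 0 ≤ bsHt q g := by
  by_contra! h
  exact hP.2.2.1 g hg (hP.mem_of_ht_pos hq ha g⁻¹ (by simpa using h))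

/-! ### Automata and bounded denominators -/

/-- If an additive weight is non-negative on a regular language, then the prefixes of accepted words
of weight zero have bounded weight: pumping shows that every loop inside such a word has weight
zero, so a prefix may be shortened to one of length less than the number of states. -/
theorem DFA.exists_prefix_bound {X σ : Type*} [Finite X] [Fintype σ] (M : DFA X σ)
    (ν : List X → ℤ) (hν : ∀ u v, ν (u ++ v) = ν u + ν v) (hpos : ∀ w ∈ M.accepts, 0 ≤ ν w) :
    ∃ C : ℕ, ∀ u v, u ++ v ∈ M.accepts → ν (u ++ v) = 0 → |ν u| ≤ C := by
  obtain ⟨C, hC⟩ := ((List.finite_length_lt X (Fintype.card σ)).image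
    (fun u => (ν u).natAbs)).bddAbove
  refine ⟨C, fun u => ?_⟩
  induction hn : u.length using Nat.strong_induction_on generalizing u with
  | _ n ih =>
    intro v hacc hzero
    by_cases hlen : u.length < Fintype.card σ
    · have h : (ν u).natAbs ≤ C := hC ⟨u, hlen, rfl⟩
      rw [Int.abs_eq_natAbs]
      exact_mod_cast h
    · obtain ⟨s, x, y, z, rfl, -, hy, hx, hyy, hz⟩ :=
        M.evalFrom_split (s := M.start) (not_lt.mp hlen) rfl
      have ev : ∀ r, M.eval (x ++ r) = M.evalFrom s r := fun r => by
        rw [DFA.eval, DFA.evalFrom_of_append, hx]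
      have e0 : x ++ y ++ z ++ v ∈ M.accepts ↔ M.evalFrom s (z ++ v) ∈ M.accept := by
        rw [DFA.mem_accepts, List.append_assoc, List.append_assoc, ev, DFA.evalFrom_of_append, hyy]
      have e1 : x ++ z ++ v ∈ M.accepts ↔ M.evalFrom s (z ++ v) ∈ M.accept := by
        rw [DFA.mem_accepts, List.append_assoc, ev]
      -- Removing the loop `y` gives `ν y ≤ 0`; repeating it gives `0 ≤ ν y`.
      have e2 : x ++ (y ++ (y ++ (z ++ v))) ∈ M.accepts
          ↔ M.evalFrom s (z ++ v) ∈ M.accept := by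
        rw [DFA.mem_accepts, ev, DFA.evalFrom_of_append, hyy, DFA.evalFrom_of_append, hyy]
      have a1 : x ++ z ++ v ∈ M.accepts := e1.mpr (e0.mp hacc)
      have p1 := hpos _ a1
      have p2 := hpos _ (e2.mpr (e0.mp hacc))
      simp only [hν] at hzero p1 p2
      have hlt : (x ++ z).length < n := by
        have := List.length_pos_iff.mpr hy
        simp only [List.length_append] at hn ⊢
        omega
      have := ih _ hlt (x ++ z) rfl v a1 (by simp only [hν]; omega)
      simp only [hν] at this ⊢
      have hy0 : ν y = 0 := by omega
      simpa [hy0] using this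

/-- Along a word whose prefixes all have height at least `-C`, the translation parts stay in a
lattice: `D q ^ C` is a common denominator as soon as `D` is one for the letters. -/
theorem bsTr_word_denom {q : ℤ} (hq : q ≠ 0) {X : Type*} (π : FreeMonoid X →* BS q) (D : ℤ)
    (hD : ∀ x, ∃ z : ℤ, (D : ℚ) * bsTr q hq (π (FreeMonoid.of x)) = z) (C : ℕ) (w : List X)
    (hw : ∀ u v, w = u ++ v → -(C : ℤ) ≤ bsHt q (π (FreeMonoid.ofList u))) :
    ∃ z : ℤ, (D : ℚ) * q ^ C * bsTr q hq (π (FreeMonoid.ofList w)) = z := by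
  have hq' : (q : ℚ) ≠ 0 := by exact_mod_cast hq
  induction w using List.reverseRecOn with
  | nil => exact ⟨0, by simp⟩
  | append_singleton p x ih =>
    obtain ⟨z, hz⟩ := ih fun u v h => hw u (v ++ [x]) (by simp [h])
    obtain ⟨y, hy⟩ := hD x
    obtain ⟨e, he⟩ : ∃ e : ℕ, (C : ℤ) + bsHt q (π (FreeMonoid.ofList p)) = e :=
      Int.eq_ofNat_of_zero_le (by have := hw p [x] rfl; omega)
    refine ⟨z + q ^ e * y, ?_⟩
    rw [FreeMonoid.ofList_append, map_mul, bsTr_mul, FreeMonoid.ofList_singleton, mul_add, hz]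
    push_cast
    rw [← hy, ← zpow_natCast (q : ℚ) e, ← he, zpow_add₀ hq', zpow_natCast]
    ring

theorem exists_common_denom {X : Type*} [Fintype X] (f : X → ℚ) :
    ∃ D : ℤ, D ≠ 0 ∧ ∀ x, ∃ z : ℤ, (D : ℚ) * f x = z := by
  refine ⟨∏ x, ((f x).den : ℤ), Finset.prod_ne_zero_iff.mpr fun x _ => by simp, fun x => ?_⟩
  obtain ⟨c, hc⟩ := Finset.dvd_prod_of_mem (fun x => ((f x).den : ℤ)) (Finset.mem_univ x)
  refine ⟨(f x).num * c, ?_⟩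
  rw [hc]
  push_cast
  have := Rat.mul_den_eq_num (f x)
  rw [← this]
  ring

/-- Heights on `P` have a constant sign, so prefixes of accepted words of height zero have bounded
height, and the elements of `P` of height zero have translation parts with a common denominator.
But `P` contains `a⁻ᵏ b aᵏ` or its inverse for every `k`, of translation part `± q ^ (-k)`. -/
theorem not_regular_of_le {q : ℤ} (hq2 : q ≤ -2) {P : Set (BS q)} (hP : IsPositiveCone P) :
    ¬ HasRegularConeEval P := by
  rintro ⟨X, _, π, -, L, ⟨σ, _, M, rfl⟩, rfl⟩
  have hq : q ≠ 0 := by omega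
  have hq' : (q : ℚ) ≠ 0 := by exact_mod_cast hq
  have hneg : q < 0 := by omega
  set ν : List X → ℤ := fun w => bsHt q (π (FreeMonoid.ofList w)) with hνdef
  have hν : ∀ u v, ν (u ++ v) = ν u + ν v := fun u v => by
    simp [hνdef, FreeMonoid.ofList_append]
  obtain ⟨C, hC⟩ : ∃ C : ℕ, ∀ u v, u ++ v ∈ M.accepts → ν (u ++ v) = 0 → |ν u| ≤ C := by
    have ha1 : bsA q ≠ 1 := fun h => by simpa [h] using bsHt_a q
    rcases hP.2.1 (bsA q) with ha | ha | ha
    · exact M.exists_prefix_bound ν hν fun w hw => hP.ht_nonneg hneg ha _ ⟨w, hw, rfl⟩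
    -- If `a` is negative, the reversed order shows that heights on `P` are non-positive.
    · obtain ⟨C, hC⟩ := M.exists_prefix_bound (fun w => -ν w) (fun u v => by rw [hν]; ring)
        fun w hw => by
          have := hP.inv.ht_nonneg hneg ha (π (FreeMonoid.ofList w))⁻¹
            (by rw [Set.mem_ofPred_eq, inv_inv]; exact ⟨w, hw, rfl⟩)
          simpa using this
      exact ⟨C, fun u v h h0 => by simpa using hC u v h (by simpa using h0)⟩
    · exact absurd ha ha1
  obtain ⟨D, hD0, hD⟩ := exists_common_denom fun x => bsTr q hq (π (FreeMonoid.of x))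
  have hden : ∀ g ∈ evalLang π M.accepts, bsHt q g = 0 →
      ∃ z : ℤ, (D : ℚ) * q ^ C * bsTr q hq g = z := by
    rintro _ ⟨w, hw, rfl⟩ h0
    refine bsTr_word_denom hq π D hD C w ?_
    rintro u v rfl
    exact (abs_le.mp (hC u v hw h0)).1
  have hdvd : ∀ k : ℕ, q ^ k ∣ D * q ^ C := by
    intro k
    set h := (bsA q ^ k)⁻¹ * bsB q ^ (1 : ℤ) * bsA q ^ k with hh
    have hht : bsHt q h = 0 := by simp [hh]
    have htr : bsTr q hq h = 1 / q ^ k := by rw [hh, bsTr_normal]; simp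
    have hqk : (q : ℚ) ^ k ≠ 0 := pow_ne_zero _ hq'
    rcases hP.2.1 h with h1 | h1 | h1
    · obtain ⟨z, hz⟩ := hden h h1 hht
      rw [htr] at hz
      refine ⟨z, ?_⟩
      field_simp at hz
      exact_mod_cast hz
    · obtain ⟨z, hz⟩ := hden h⁻¹ h1 (by simp [hht])
      have h2 := bsTr_inv q hq h
      rw [hht, zpow_zero, one_mul] at h2
      rw [h2, htr] at hz
      refine ⟨-z, ?_⟩
      field_simp at hz
      have : D * q ^ C = - (q ^ k * z) := by
        have h3 : -((D : ℚ) * q ^ C) = q ^ k * z := by linarith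
        have h4 : -(D * q ^ C) = q ^ k * z := by exact_mod_cast h3
        omega
      rw [this]; ring
    · rw [h1, bsTr_one] at htr
      exact absurd htr.symm (one_div_ne_zero hqk)
  have hne : D * q ^ C ≠ 0 := mul_ne_zero hD0 (pow_ne_zero _ hq)
  -- The exponent `k = |D q ^ C|` is large enough, since `|D q ^ C| < 2 ^ k ≤ |q| ^ k`.
  have h1 := Int.natAbs_le_of_dvd_ne_zero (hdvd (D * q ^ C).natAbs) hne
  rw [Int.natAbs_pow] at h1
  have h2 : (D * q ^ C).natAbs < 2 ^ (D * q ^ C).natAbs := Nat.lt_two_pow_self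
  have h3 : 2 ^ (D * q ^ C).natAbs ≤ q.natAbs ^ (D * q ^ C).natAbs :=
    Nat.pow_le_pow_left (by omega) _
  omega

/-! ### Regular positive cones for `q ≥ -1` -/

/-- The element of `BS(1,q)` represented by a word in `a, a⁻¹, b, b⁻¹` (letters `0, 1, 2, 3`). -/
def bsWord (q : ℤ) (w : List (Fin 4)) : BS q := bsPi q (FreeMonoid.ofList w)

@[simp] theorem bsWord_nil (q : ℤ) : bsWord q [] = 1 := by simp [bsWord]

@[simp] theorem bsWord_append (q : ℤ) (u v : List (Fin 4)) :
    bsWord q (u ++ v) = bsWord q u * bsWord q v := by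
  simp [bsWord, FreeMonoid.ofList_append]

@[simp] theorem bsWord_singleton (q : ℤ) (x : Fin 4) :
    bsWord q [x] = ![bsA q, (bsA q)⁻¹, bsB q, (bsB q)⁻¹] x := by
  simp [bsWord, bsPi]

@[simp] theorem bsWord_replicate (q : ℤ) (n : ℕ) (x : Fin 4) :
    bsWord q (List.replicate n x) = ![bsA q, (bsA q)⁻¹, bsB q, (bsB q)⁻¹] x ^ n := by
  induction n with
  | zero => simp
  | succ n ih => rw [List.replicate_succ', bsWord_append, ih, bsWord_singleton, pow_succ]

/-- Every power of `b`, of either sign, is represented by a power of the letter `b` or of `b⁻¹`. -/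
theorem exists_replicate_b (q m : ℤ) :
    ∃ n : ℕ, bsB q ^ m = bsWord q (List.replicate n 2) ∨
      bsB q ^ m = bsWord q (List.replicate n 3) := by
  obtain ⟨n, rfl | rfl⟩ := m.eq_nat_or_neg
  · exact ⟨n, Or.inl (by simp)⟩
  · exact ⟨n, Or.inr (by simp)⟩

theorem bsPi_surjective (q : ℤ) : Function.Surjective (bsPi q) := by
  intro g
  obtain ⟨k, l, m, rfl⟩ := bs_normal_form q g
  obtain ⟨n, h | h⟩ := exists_replicate_b q m
  · refine ⟨FreeMonoid.ofList (List.replicate k 1 ++ List.replicate n 2 ++ List.replicate l 0), ?_⟩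
    change bsWord q _ = _
    rw [h]
    simp [mul_assoc]
  · refine ⟨FreeMonoid.ofList (List.replicate k 1 ++ List.replicate n 3 ++ List.replicate l 0), ?_⟩
    change bsWord q _ = _
    rw [h]
    simp [mul_assoc]

/-- The automaton on the letters `a, a⁻¹, b, b⁻¹` with states `0, …, 4`, initial state `0`,
transition table `T` and accepting states `acc`. -/
def tableDFA (T : Fin 5 → Fin 4 → Fin 5) (acc : Set (Fin 5)) : DFA (Fin 4) (Fin 5) := ⟨T, 0, acc⟩

theorem tableDFA_loop (T : Fin 5 → Fin 4 → Fin 5) (acc : Set (Fin 5)) {s : Fin 5} {x : Fin 4}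
    (h : T s x = s) (n : ℕ) : (tableDFA T acc).evalFrom s (List.replicate n x) = s := by
  induction n with
  | zero => rfl
  | succ n ih =>
    rw [List.replicate_succ', DFA.evalFrom_append_singleton, ih]
    exact h

theorem tableDFA_enter (T : Fin 5 → Fin 4 → Fin 5) (acc : Set (Fin 5)) {s s' : Fin 5} {x : Fin 4}
    (h : T s x = s') (h' : T s' x = s') (n : ℕ) :
    (tableDFA T acc).evalFrom s (List.replicate (n + 1) x) = s' := by
  rw [List.replicate_succ, DFA.evalFrom_cons]
  change DFA.evalFrom _ (T s x) _ = _
  rw [h]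
  exact tableDFA_loop T acc h' n

/-- A set is the evaluation of the language of a table automaton as soon as an invariant of the
states shows that accepted words lie in it, and every element has an accepted word. -/
theorem regular_of_table {q : ℤ} {P : Set (BS q)} (T : Fin 5 → Fin 4 → Fin 5) (acc : Set (Fin 5))
    (I : Fin 5 → BS q → Prop) (h0 : I 0 1)
    (hstep : ∀ s x g, I s g → I (T s x) (g * ![bsA q, (bsA q)⁻¹, bsB q, (bsB q)⁻¹] x))
    (hacc : ∀ s ∈ acc, ∀ g, I s g → g ∈ P)
    (hP : ∀ g ∈ P, ∃ w, (tableDFA T acc).evalFrom 0 w ∈ acc ∧ bsWord q w = g) :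
    HasRegularConeEval P := by
  refine ⟨Fin 4, inferInstance, bsPi q, bsPi_surjective q, (tableDFA T acc).accepts,
    ⟨Fin 5, inferInstance, tableDFA T acc, rfl⟩, ?_⟩
  have inv : ∀ w, I ((tableDFA T acc).evalFrom 0 w) (bsWord q w) := by
    intro w
    induction w using List.reverseRecOn with
    | nil => simpa using h0
    | append_singleton w x ih =>
      rw [DFA.evalFrom_append_singleton, bsWord_append, bsWord_singleton]
      exact hstep _ _ _ ih
  ext g
  constructor
  · rintro ⟨w, hw, rfl⟩
    exact hacc _ hw _ (inv w)
  · intro hg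
    obtain ⟨w, hw, rfl⟩ := hP g hg
    exact ⟨w, hw, rfl⟩

/-- The elements whose affine map moves `0` to the right, together with the elements that fix `0` and
have positive height. It is used for `q ≥ 1`, where the affine maps preserve the order of `ℚ`. -/
def posCone (q : ℤ) (hq : q ≠ 0) : Set (BS q) :=
  {g | 0 < bsTr q hq g ∨ bsTr q hq g = 0 ∧ 0 < bsHt q g}

theorem posCone_isPositiveCone {q : ℤ} (hq : q ≠ 0) (h1 : 1 ≤ q) :
    IsPositiveCone (posCone q hq) := by
  have hq' : (0 : ℚ) < q := by exact_mod_cast h1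
  refine ⟨?_, ?_, ?_, by simp [posCone]⟩
  · intro g hg h hh
    have hz : (0 : ℚ) < (q : ℚ) ^ bsHt q g := zpow_pos hq' _
    simp only [posCone, Set.mem_ofPred_eq, bsTr_mul, bsHt_mul] at *
    rcases hg with hg | ⟨hg, hg'⟩ <;> rcases hh with hh | ⟨hh, hh'⟩
    · left; positivity
    · left; rw [hh]; linarith
    · left; rw [hg]; positivity
    · right; rw [hg, hh]; exact ⟨by simp, by omega⟩
  · intro g
    have hz : (0 : ℚ) < (q : ℚ) ^ bsHt q g := zpow_pos hq' _
    have hi := bsTr_inv q hq g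
    simp only [posCone, Set.mem_ofPred_eq, bsHt_inv]
    rcases lt_trichotomy (bsTr q hq g) 0 with h | h | h
    · right; left; left
      exact pos_of_mul_pos_right (by rw [hi]; linarith) hz.le
    · have hi0 : bsTr q hq g⁻¹ = 0 := by
        rw [h, neg_zero] at hi
        exact (mul_eq_zero.mp hi).resolve_left hz.ne'
      rcases lt_trichotomy (bsHt q g) 0 with h' | h' | h'
      · right; left; right; exact ⟨hi0, by omega⟩
      · right; right; exact bs_eq_one q hq g h' h
      · left; right; exact ⟨h, h'⟩
    · left; left; exact h
  · intro g
    have hz : (0 : ℚ) < (q : ℚ) ^ bsHt q g := zpow_pos hq' _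
    have hi := bsTr_inv q hq g
    simp only [posCone, Set.mem_ofPred_eq, bsHt_inv]
    rintro (h | ⟨h, h'⟩) (k | ⟨k, k'⟩)
    · have := mul_pos hz k; linarith
    · rw [k] at hi; linarith
    · have := mul_pos hz k; linarith
    · omega

/-- The language is `(a⁻¹)* b⁺ a* ∪ a⁺`: the element `a⁻ᵏ bᵐ aˡ` has translation part `m / q ^ k`, so
the sign of `m` is read off without comparing `k` and `l`. State `1` is reached by `(a⁻¹)⁺`, state
`2` by `(a⁻¹)* b⁺`, state `3` by the accepted words ending in `a`; state `4` is a sink. -/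
theorem posCone_regular {q : ℤ} (hq : q ≠ 0) (h1 : 1 ≤ q) : HasRegularConeEval (posCone q hq) := by
  have hq' : (0 : ℚ) < q := by exact_mod_cast h1
  have hta : bsTr q hq (bsA q)⁻¹ = 0 := by simpa [hq] using bsTr_inv q hq (bsA q)
  refine regular_of_table
    ![![3, 1, 2, 4], ![4, 1, 2, 4], ![3, 4, 2, 4], ![3, 4, 4, 4], ![4, 4, 4, 4]] {2, 3}
    (fun s g => ![g = 1, bsTr q hq g = 0, 0 < bsTr q hq g, g ∈ posCone q hq, True] s) rfl ?_ ?_ ?_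
  · intro s x g hg
    have hz : (0 : ℚ) < (q : ℚ) ^ bsHt q g := zpow_pos hq' _
    fin_cases s <;> fin_cases x <;> simp [posCone, bsTr_mul, hta] at hg ⊢
    all_goals first
      | (subst hg; simp)
      | (left; exact hg)
      | exact hg
      | (rw [hg]; simpa using hz)
      | positivity
      | (rcases hg with hg | ⟨hg, hg'⟩
         · exact Or.inl hg
         · exact Or.inr ⟨hg, by omega⟩)
  · rintro s (rfl | rfl) g hg
    · exact Or.inl hg
    · exact hg
  · intro g hg
    obtain ⟨k, l, m, rfl⟩ := bs_normal_form q g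
    simp only [posCone, Set.mem_ofPred_eq, bsTr_normal] at hg
    rcases hg with hg | ⟨hg, hg'⟩
    · have hm : 0 < m := by
        have := (div_pos_iff_of_pos_right (pow_pos hq' k)).mp hg
        exact_mod_cast this
      obtain ⟨n, rfl⟩ : ∃ n : ℕ, m = (n + 1 : ℕ) := ⟨(m - 1).toNat, by omega⟩
      refine ⟨List.replicate k 1 ++ List.replicate (n + 1) 2 ++ List.replicate l 0, ?_, by
        simp only [bsWord_append, bsWord_replicate, zpow_natCast]; simp⟩
      rw [DFA.evalFrom_of_append, DFA.evalFrom_of_append]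
      have e1 : ∀ T acc, (T 0 1 = 1) → T 1 1 = 1 → T 0 2 = 2 → T 1 2 = 2 → T 2 2 = 2 →
          (tableDFA T acc).evalFrom ((tableDFA T acc).evalFrom 0 (List.replicate k 1))
            (List.replicate (n + 1) 2) = 2 := by
        intro T acc t1 t2 t3 t4 t5
        rcases k with _ | k
        · exact tableDFA_enter T acc t3 t5 n
        · rw [tableDFA_enter T acc t1 t2 k]
          exact tableDFA_enter T acc t4 t5 n
      rw [e1 _ _ rfl rfl rfl rfl rfl]
      rcases l with _ | l
      · exact Or.inl rfl
      · rw [tableDFA_enter (s' := 3) _ _ rfl rfl]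
        exact Or.inr rfl
    · have hm : m = 0 := by
        have := (div_eq_zero_iff.mp hg).resolve_right (pow_ne_zero _ hq'.ne')
        exact_mod_cast this
      subst hm
      have hkl : k < l := by simpa using hg'
      obtain ⟨d, rfl⟩ := Nat.exists_eq_add_of_lt hkl
      refine ⟨List.replicate (d + 1) 0, ?_, by
        simp only [bsWord_replicate]; rw [add_assoc, pow_add (bsA q) k]; simp⟩
      rw [tableDFA_enter (s' := 3) _ _ rfl rfl]
      exact Or.inr rfl

/-- The lexicographic cone of the Klein bottle group `BS(1,-1)`: positive height, or height zero and
a positive power of `b`. -/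
def kleinCone : Set (BS (-1)) :=
  {g | 0 < bsHt (-1) g ∨ bsHt (-1) g = 0 ∧ 0 < bsTr (-1) (by decide) g}

theorem kleinCone_isPositiveCone : IsPositiveCone kleinCone := by
  refine ⟨?_, ?_, ?_, by simp [kleinCone]⟩
  · intro g hg h hh
    simp only [kleinCone, Set.mem_ofPred_eq, bsTr_mul, bsHt_mul] at *
    rcases hg with hg | ⟨hg, hg'⟩ <;> rcases hh with hh | ⟨hh, hh'⟩
    · left; omega
    · left; omega
    · left; omega
    · right; rw [hg, hh]; exact ⟨rfl, by rw [zpow_zero]; linarith⟩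
  · intro g
    have hi := bsTr_inv (-1) (by decide) g
    simp only [kleinCone, Set.mem_ofPred_eq, bsHt_inv]
    rcases lt_trichotomy (bsHt (-1) g) 0 with h | h | h
    · right; left; left; omega
    · rw [h, zpow_zero, one_mul] at hi
      rw [h, hi]
      rcases lt_trichotomy (bsTr (-1) (by decide) g) 0 with h' | h' | h'
      · right; left; right; exact ⟨rfl, by linarith⟩
      · right; right; exact bs_eq_one _ (by decide) g h h'
      · left; right; exact ⟨rfl, h'⟩
    · left; left; exact h
  · intro g
    have hi := bsTr_inv (-1) (by decide) g
    simp only [kleinCone, Set.mem_ofPred_eq, bsHt_inv]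
    rintro (h | ⟨h, h'⟩) (k | ⟨k, k'⟩)
    · omega
    · omega
    · omega
    · rw [h, zpow_zero, one_mul] at hi
      linarith

/-- In the Klein bottle group `⟨b⟩` is normal, so elements of height `N ≥ 0` have the form
`bᵐ aᴺ`. -/
theorem klein_normal_form (g : BS (-1)) (N : ℕ) (hg : bsHt (-1) g = N) :
    ∃ m : ℤ, g = bsB (-1) ^ m * bsA (-1) ^ N := by
  obtain ⟨k, l, m, rfl⟩ := bs_normal_form (-1) g
  obtain rfl : l = k + N := by
    simp at hg
    omega
  refine ⟨(-1) ^ k * m, ?_⟩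
  have h := bs_conj_pow_zpow (-1) ((-1) ^ k * m) k
  rw [← mul_assoc, ← mul_pow, neg_one_mul, neg_neg, one_pow, one_mul] at h
  rw [pow_add, ← mul_assoc]
  congr 1
  rw [mul_assoc, inv_mul_eq_iff_eq_mul, ← h]

/-- The language is `b* a⁺ ∪ (b⁻¹)* a⁺ ∪ b⁺`. State `1` is reached by `b⁺`, state `2` by `(b⁻¹)⁺`,
state `3` by the words ending in `a`; state `4` is a sink. -/
theorem kleinCone_regular : HasRegularConeEval kleinCone := by
  have h1 : (-1 : ℤ) ≠ 0 := by decide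
  refine regular_of_table
    ![![3, 4, 1, 2], ![3, 4, 1, 4], ![3, 4, 4, 2], ![3, 4, 4, 4], ![4, 4, 4, 4]] {1, 3}
    (fun s g => ![g = 1, bsHt (-1) g = 0 ∧ 0 < bsTr (-1) h1 g, bsHt (-1) g = 0,
      0 < bsHt (-1) g, True] s) rfl ?_ ?_ ?_
  · intro s x g hg
    fin_cases s <;> fin_cases x <;> simp [bsTr_mul] at hg ⊢
    all_goals first
      | (subst hg; simp)
      | omega
      | (rw [hg.1, zpow_zero]; exact ⟨rfl, by linarith [hg.2]⟩)
  · rintro s (rfl | rfl) g hg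
    · exact Or.inr hg
    · exact Or.inl hg
  · intro g hg
    rcases hg with hg | ⟨hg, hg'⟩
    · obtain ⟨N, hN⟩ : ∃ N : ℕ, bsHt (-1) g = (N + 1 : ℕ) :=
        ⟨(bsHt (-1) g - 1).toNat, by omega⟩
      obtain ⟨m, rfl⟩ := klein_normal_form g _ hN
      obtain ⟨n, h | h⟩ := exists_replicate_b (-1) m
      -- An empty power of `b` leaves the automaton in its initial state.
      · refine ⟨List.replicate n 2 ++ List.replicate (N + 1) 0, ?_, by rw [h]; simp⟩
        rw [DFA.evalFrom_of_append]
        rcases n with _ | n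
        · rw [List.replicate_zero, DFA.evalFrom_nil, tableDFA_enter (s' := 3) _ _ rfl rfl]
          exact Or.inr rfl
        · rw [tableDFA_enter (s := 0) (s' := 1) _ _ rfl rfl,
            tableDFA_enter (s' := 3) _ _ rfl rfl]
          exact Or.inr rfl
      · refine ⟨List.replicate n 3 ++ List.replicate (N + 1) 0, ?_, by rw [h]; simp⟩
        rw [DFA.evalFrom_of_append]
        rcases n with _ | n
        · rw [List.replicate_zero, DFA.evalFrom_nil, tableDFA_enter (s' := 3) _ _ rfl rfl]
          exact Or.inr rfl
        · rw [tableDFA_enter (s := 0) (s' := 2) _ _ rfl rfl,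
            tableDFA_enter (s' := 3) _ _ rfl rfl]
          exact Or.inr rfl
    · obtain ⟨m, rfl⟩ := klein_normal_form g 0 (by simpa using hg)
      have hm : 0 < m := by
        have := bsTr_normal (-1) h1 0 0 m
        simp only [pow_zero, inv_one, one_mul, mul_one, div_one] at this hg'
        rw [this] at hg'
        exact_mod_cast hg'
      obtain ⟨n, rfl⟩ : ∃ n : ℕ, m = (n + 1 : ℕ) := ⟨(m - 1).toNat, by omega⟩
      refine ⟨List.replicate (n + 1) 2, ?_, by
        simp only [bsWord_replicate, zpow_natCast]; simp⟩
      rw [tableDFA_enter (s' := 1) _ _ rfl rfl]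
      exact Or.inl rfl

theorem bsB_zero : bsB 0 = 1 := by
  have h := bs_conj 0
  rw [zpow_zero, mul_inv_eq_one] at h
  simpa using h

theorem zero_normal_form (g : BS 0) : g = bsA 0 ^ bsHt 0 g := by
  obtain ⟨k, l, m, rfl⟩ := bs_normal_form 0 g
  simp [bsB_zero, zpow_add]

/-- The group `BS(1,0)` is infinite cyclic on `a`, and `a⁺` is a regular positive cone. -/
theorem exists_regular_cone_zero :
    ∃ P : Set (BS 0), IsPositiveCone P ∧ HasRegularConeEval P := by
  refine ⟨{g | 0 < bsHt 0 g}, ⟨fun g hg h hh => ?_, fun g => ?_, fun g hg hg' => ?_, by simp⟩, ?_⟩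
  · simp only [Set.mem_ofPred_eq, bsHt_mul] at *
    omega
  · simp only [Set.mem_ofPred_eq, bsHt_inv]
    rcases lt_trichotomy (bsHt 0 g) 0 with h | h | h
    · right; left; omega
    · right; right; rw [zero_normal_form g, h, zpow_zero]
    · left; exact h
  · simp only [Set.mem_ofPred_eq, bsHt_inv] at hg hg'
    omega
  · refine regular_of_table
      ![![3, 4, 4, 4], ![4, 4, 4, 4], ![4, 4, 4, 4], ![3, 4, 4, 4], ![4, 4, 4, 4]] {3}
      (fun s g => ![g = 1, True, True, 0 < bsHt 0 g, True] s) rfl ?_ ?_ ?_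
    · intro s x g hg
      fin_cases s <;> fin_cases x <;> simp at hg ⊢
      all_goals first
        | (subst hg; simp)
        | omega
    · rintro s rfl g hg
      exact hg
    · intro g hg
      obtain ⟨N, hN⟩ : ∃ N : ℕ, bsHt 0 g = (N + 1 : ℕ) :=
        ⟨(bsHt 0 g - 1).toNat, by simp only [Set.mem_ofPred_eq] at hg; omega⟩
      refine ⟨List.replicate (N + 1) 0, ?_, ?_⟩
      · rw [tableDFA_enter (s' := 3) _ _ rfl rfl]
        rfl
      · rw [zero_normal_form g, hN, zpow_natCast, bsWord_replicate]
        rfl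

/-- The solvable Baumslag–Solitar group `BS(1,q)` admits a regular positive cone with
respect to some finite generating set if and only if `q ≥ −1`. (For `q = 0` the
presentation `⟨a, b ∣ a b a⁻¹ = 1⟩` collapses to `ℤ`, matching the convention
`BS(1,0) = ℤ`.) -/
theorem stmt10 (q : ℤ) :
    (∃ P : Set (BS q), IsPositiveCone P ∧ HasRegularConeEval P) ↔ -1 ≤ q := by
  constructor
  · rintro ⟨P, hP, hreg⟩
    by_contra! h
    exact not_regular_of_le (by omega) hP hreg
  · intro h
    obtain rfl | rfl | h1 : q = -1 ∨ q = 0 ∨ 1 ≤ q := by omega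
    · exact ⟨kleinCone, kleinCone_isPositiveCone, kleinCone_regular⟩
    · exact exists_regular_cone_zero
    · have hq : q ≠ 0 := by omega
      exact ⟨posCone q hq, posCone_isPositiveCone hq h1, posCone_regular hq h1⟩
end

section
/- Let G be a group and τ : G → ℤ a function satisfying: (i) C = {g ∈ G : τ(g) = 0} is a subgroup of G; (ii) τ(g) = −τ(g⁻¹) for all g ∈ G; (iii) τ(g) + τ(h) + τ((gh)⁻¹) ≤ 1 for all g, h ∈ G. Then P = {g ∈ G : τ(g) > 0} is a positive cone relative to C, i.e. P is a subsemigroup and G is the disjoint union P ⊔ C ⊔ P⁻¹. -/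
/-- If `τ : G → ℤ` satisfies (i) `{g : τ(g) = 0}` is a subgroup `C`, (ii)
`τ(g) = −τ(g⁻¹)`, and (iii) `τ(g) + τ(h) + τ((gh)⁻¹) ≤ 1`, then `{g : τ(g) > 0}` is a
positive cone relative to `C`. -/
theorem stmt14 {G : Type*} [Group G] (τ : G → ℤ) (C : Subgroup G)
    (hC : ∀ g : G, g ∈ C ↔ τ g = 0)
    (hinv : ∀ g : G, τ g = -τ g⁻¹)
    (htri : ∀ g h : G, τ g + τ h + τ (g * h)⁻¹ ≤ 1) :
    IsRelPositiveCone C {g : G | 0 < τ g} := by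
  refine ⟨fun a ha b hb => ?_, fun g => ?_, fun g hg hg' => ?_, fun g hg hgC => ?_⟩
  · -- `τ (a * b) ≥ τ a + τ b - 1 ≥ 1`, the last step because `τ` takes integer values.
    have h1 := htri a b
    have h2 := hinv (a * b)
    simp only [Set.mem_ofPred_eq] at *
    omega
  · have h := hinv g
    simp only [Set.mem_ofPred_eq, hC]
    omega
  · have h := hinv g
    simp only [Set.mem_ofPred_eq] at hg hg'
    omega
  · rw [hC] at hgC
    simp only [Set.mem_ofPred_eq] at hg
    omega
end

section
/- Let G be a group, C a subgroup of G, and τ : G → ℤ an ordering quasi-morphism with kernel C (i.e. {g : τ(g) = 0} = C, τ(g) = −τ(g⁻¹), and τ(g) + τ(h) + τ((gh)⁻¹) ≤ 1 for all g, h) whose values lie in (2ℤ + 1) ∪ {0}, i.e. τ(g) is odd for every g ∉ C. Then P = {(g, n) ∈ G × ℤ : τ(g) + 2n > 0} is a positive cone of G × ℤ relative to the subgroup C × {0}. -/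
/-- If `τ : G → ℤ` is an ordering quasi-morphism with kernel `C` taking odd values
outside `C`, then `P = {(g,n) : τ(g) + 2n > 0}` is a positive cone of `G × ℤ` relative
to `C × {0}`. -/
theorem stmt15 {G : Type*} [Group G] (τ : G → ℤ) (C : Subgroup G)
    (hC : ∀ g : G, g ∈ C ↔ τ g = 0)
    (hinv : ∀ g : G, τ g = -τ g⁻¹)
    (htri : ∀ g h : G, τ g + τ h + τ (g * h)⁻¹ ≤ 1)
    (hodd : ∀ g : G, g ∉ C → Odd (τ g)) :
    IsRelPositiveCone (C.prod (⊥ : Subgroup (Multiplicative ℤ)))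
      {p : G × Multiplicative ℤ | 0 < τ p.1 + 2 * Multiplicative.toAdd p.2} := by
  -- The value of `(g, n)⁻¹` is the negative of the value of `(g, n)`.
  have inv_val (g : G) : τ g⁻¹ = -τ g := by have := hinv g; lia
  refine ⟨?_, ?_, ?_, ?_⟩
  · -- Values are integers, so positive means `≥ 1`, and the value of a product is at least
    -- the sum of the two values minus `1`.
    rintro ⟨g, m⟩ hg ⟨h, n⟩ hh
    have h1 := htri g h
    rw [inv_val] at h1
    simp only [Set.mem_ofPred_eq, Prod.mk_mul_mk, toAdd_mul] at hg hh ⊢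
    lia
  · rintro ⟨g, n⟩
    simp only [Set.mem_ofPred_eq, Prod.inv_mk, toAdd_inv, inv_val, Subgroup.mem_prod,
      Subgroup.mem_bot, ← toAdd_eq_zero]
    by_cases hg : g ∈ C
    · have h0 := (hC g).1 hg
      simp only [hg, true_and]
      lia
    · -- An odd number plus an even one is never zero.
      obtain ⟨k, hk⟩ := hodd g hg
      lia
  · rintro ⟨g, n⟩ hg
    simp only [Set.mem_ofPred_eq, Prod.inv_mk, toAdd_inv, inv_val] at hg ⊢
    lia
  · rintro ⟨g, n⟩ hg hgC
    simp only [Set.mem_ofPred_eq, Subgroup.mem_prod, Subgroup.mem_bot, hC,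
      ← toAdd_eq_zero] at hg hgC
    lia
end
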